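/- For every n ≥ 4, the number of permutations of {1,…,n} avoiding 132 and containing 231 exactly once equals the number of permutations of {1,…,n} containing each of 132 and 231 exactly once; that is, s_n(132;231) = s_n(∅;{132,231}) for n ≥ 4 (both equal 2^{n−3}). -/

import Mathlib

/-- Number of occurrences of the pattern `α ∈ S_k` in the permutation `π ∈ S_n`:
the number of strictly increasing choices of `k` indices such that the corresponding
subword of `π` is order-isomorphic to `α`. -/
noncomputable def occCount {k n : ℕ} (α : Equiv.Perm (Fin k)) (π : Equiv.Perm (Fin n)) : ℕ :=
  Nat.card {f : Fin k → Fin n // StrictMono f ∧ ∀ a b : Fin k, α a < α b ↔ π (f a) < π (f b)}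

/-- `π` avoids the pattern `α`. -/
def avoids {k n : ℕ} (α : Equiv.Perm (Fin k)) (π : Equiv.Perm (Fin n)) : Prop :=
  occCount α π = 0

/-- `π` contains the pattern `α` exactly once. -/
def containsOnce {k n : ℕ} (α : Equiv.Perm (Fin k)) (π : Equiv.Perm (Fin n)) : Prop :=
  occCount α π = 1

/-- The pattern `123` (as a permutation of `Fin 3`, 0-indexed). -/
def p123 : Equiv.Perm (Fin 3) := ⟨![0,1,2], ![0,1,2], by decide, by decide⟩
/-- The pattern `132`. -/
def p132 : Equiv.Perm (Fin 3) := ⟨![0,2,1], ![0,2,1], by decide, by decide⟩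
/-- The pattern `213`. -/
def p213 : Equiv.Perm (Fin 3) := ⟨![1,0,2], ![1,0,2], by decide, by decide⟩
/-- The pattern `231`. -/
def p231 : Equiv.Perm (Fin 3) := ⟨![1,2,0], ![2,0,1], by decide, by decide⟩
/-- The pattern `312`. -/
def p312 : Equiv.Perm (Fin 3) := ⟨![2,0,1], ![1,2,0], by decide, by decide⟩
/-- The pattern `321`. -/
def p321 : Equiv.Perm (Fin 3) := ⟨![2,1,0], ![2,1,0], by decide, by decide⟩

/-- `s_n(α;β)`: the number of permutations of `{1,…,n}` that avoid `α` and contain `β`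
exactly once. -/
noncomputable def sAvoidContain (α β : Equiv.Perm (Fin 3)) (n : ℕ) : ℕ :=
  Nat.card {π : Equiv.Perm (Fin n) // avoids α π ∧ containsOnce β π}

/-- `s_n(∅;{α,β})`: the number of permutations of `{1,…,n}` that contain each of `α` and `β`
exactly once. -/
noncomputable def sContainBoth (α β : Equiv.Perm (Fin 3)) (n : ℕ) : ℕ :=
  Nat.card {π : Equiv.Perm (Fin n) // containsOnce α π ∧ containsOnce β π}

/-!
Let the maximum of `π ∈ S_{m+1}` stand at position `p` (counted from `0`). Each of the `p * (m - p)`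
pairs consisting of one entry to its left and one to its right forms, together with the maximum, a
`132` or a `231`. An interior maximum thus forces at least `m - 1` occurrences of the two
patterns altogether, so if there are fewer, the maximum stands at an end. There it takes part in no
occurrence of either pattern, because the largest letter of both is the middle one. Hence, for fixed
numbers of occurrences, the number of permutations doubles with each increase in length once the
length is large enough; it remains to start the two doublings, with `231` in `S_3` and with `2413`
and `3142` in `S_4`.
-/

open Equiv Set

section Occurrence

variable {k m n : ℕ} {α : Perm (Fin k)} {π : Perm (Fin n)} {f : Fin k → Fin n}

/-- The positions `f 0 < f 1 < ⋯` form an occurrence of the pattern `α` in `π`; these are the `f`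
counted by `occCount α π`. -/
def IsOccurrence (α : Perm (Fin k)) (π : Perm (Fin n)) (f : Fin k → Fin n) : Prop :=
  StrictMono f ∧ ∀ a b : Fin k, α a < α b ↔ π (f a) < π (f b)

instance (α : Perm (Fin k)) (π : Perm (Fin n)) : DecidablePred (IsOccurrence α π) := fun f =>
  inferInstanceAs <| Decidable <|
    (∀ a b, a < b → f a < f b) ∧ ∀ a b : Fin k, α a < α b ↔ π (f a) < π (f b)

theorem occCount_eq_ncard (α : Perm (Fin k)) (π : Perm (Fin n)) :
    occCount α π = {f | IsOccurrence α π f}.ncard :=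
  rfl

theorem occCount_eq_fintypeCard (α : Perm (Fin k)) (π : Perm (Fin n)) :
    occCount α π = Fintype.card {f // IsOccurrence α π f} :=
  Nat.card_eq_fintype_card

theorem isOccurrence_iff_strictMono :
    IsOccurrence α π f ↔ StrictMono f ∧ StrictMono (π ∘ f ∘ α.symm) := by
  refine and_congr_right fun _ => ⟨fun h a b hab => ?_, fun h a b => ?_⟩
  · exact (h _ _).1 (by simpa using hab)
  · simpa using (h.lt_iff_lt (a := α a) (b := α b)).symm

theorem occCount_eq_ite (α π : Perm (Fin k)) : occCount α π = if α = π then 1 else 0 := by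
  have occurrences_eq : {f | IsOccurrence α π f} = {f | f = id ∧ α = π} := by
    ext f
    simp only [mem_ofPred_eq, isOccurrence_iff_strictMono]
    constructor
    · rintro ⟨hf, hα⟩
      obtain rfl := hf.eq_id
      exact ⟨rfl, Equiv.ext fun a => by simpa using (hα.apply_eq (x := α a)).symm⟩
    · rintro ⟨rfl, rfl⟩
      exact ⟨strictMono_id, by simpa using strictMono_id⟩
  rw [occCount_eq_ncard, occurrences_eq]
  split_ifs with h <;> simp [h]

theorem isOccurrence_p132 {i j l : Fin n} (hij : i < j) (hjl : j < l)
    (hπil : π i < π l) (hπlj : π l < π j) : IsOccurrence p132 π ![i, j, l] := by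
  simp [isOccurrence_iff_strictMono, Fin.strictMono_iff_lt_succ, Fin.forall_fin_two, p132, *]

theorem isOccurrence_p231 {i j l : Fin n} (hij : i < j) (hjl : j < l)
    (hπli : π l < π i) (hπij : π i < π j) : IsOccurrence p231 π ![i, j, l] := by
  simp [isOccurrence_iff_strictMono, Fin.strictMono_iff_lt_succ, Fin.forall_fin_two, p231, *]

theorem IsOccurrence.eq_last_of_apply_eq_last {α : Perm (Fin (k + 1))} {π : Perm (Fin (m + 1))}
    {f : Fin (k + 1) → Fin (m + 1)} (hf : IsOccurrence α π f) {a : Fin (k + 1)}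
    (ha : π (f a) = Fin.last m) : α a = Fin.last k := by
  by_contra h
  have hlt : π (f a) < π (f (α.symm (Fin.last k))) :=
    (hf.2 _ _).1 (by simpa using Fin.lt_last_iff_ne_last.2 h)
  exact (Fin.le_last _).not_gt (ha ▸ hlt)

end Occurrence

section Insertion

variable {k m : ℕ}

/-- The permutation obtained from `σ` by inserting an entry of value `v` at position `p`, the
entries of `σ` that are at least `v` being raised by one. -/
def insertEntry (p v : Fin (m + 1)) (σ : Perm (Fin m)) : Perm (Fin (m + 1)) :=
  ((finSuccEquiv' p).trans σ.optionCongr).trans (finSuccEquiv' v).symm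

@[simp]
theorem insertEntry_apply_self (p v : Fin (m + 1)) (σ : Perm (Fin m)) :
    insertEntry p v σ p = v := by
  simp [insertEntry]

@[simp]
theorem insertEntry_apply_succAbove (p v : Fin (m + 1)) (σ : Perm (Fin m)) (i : Fin m) :
    insertEntry p v σ (p.succAbove i) = v.succAbove (σ i) := by
  simp [insertEntry]

theorem insertEntry_injective (p v : Fin (m + 1)) : (insertEntry p v).Injective := by
  refine fun σ τ h => Equiv.ext fun i => v.succAbove_right_injective ?_
  simpa using DFunLike.congr_fun h (p.succAbove i)

theorem range_insertEntry (p v : Fin (m + 1)) : range (insertEntry p v) = {π | π p = v} := by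
  refine Subset.antisymm (range_subset_iff.2 fun σ => insertEntry_apply_self p v σ) ?_
  rintro π rfl
  have hne (i : Fin m) : π (p.succAbove i) ≠ π p := π.injective.ne (p.succAbove_ne i)
  choose g hg using fun i => Fin.exists_succAbove_eq (hne i)
  have hg_inj : g.Injective := fun i j hij =>
    p.succAbove_right_injective <| π.injective <| by rw [← hg, ← hg, hij]
  refine ⟨.ofBijective g (Finite.injective_iff_bijective.1 hg_inj), Equiv.ext fun x => ?_⟩
  obtain rfl | ⟨i, rfl⟩ := p.eq_self_or_eq_succAbove x <;> simp [hg]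

theorem isOccurrence_insertEntry_succAbove_comp {α : Perm (Fin k)} {p v : Fin (m + 1)}
    {σ : Perm (Fin m)} {f : Fin k → Fin m} :
    IsOccurrence α (insertEntry p v σ) (p.succAbove ∘ f) ↔ IsOccurrence α σ f := by
  simp [IsOccurrence, StrictMono, Fin.succAbove_lt_succAbove_iff]

theorem occCount_insertEntry_of_forall_ne {α : Perm (Fin k)} {p v : Fin (m + 1)}
    {σ : Perm (Fin m)}
    (h : ∀ f, IsOccurrence α (insertEntry p v σ) f → ∀ a, f a ≠ p) :
    occCount α (insertEntry p v σ) = occCount α σ := by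
  have himage : {f | IsOccurrence α (insertEntry p v σ) f} =
      (p.succAbove ∘ ·) '' {f | IsOccurrence α σ f} := by
    ext f
    constructor
    · intro hf
      choose g hg using fun a => Fin.exists_succAbove_eq (h f hf a)
      obtain rfl : p.succAbove ∘ g = f := funext hg
      exact ⟨g, isOccurrence_insertEntry_succAbove_comp.1 hf, rfl⟩
    · rintro ⟨g, hg, rfl⟩
      exact isOccurrence_insertEntry_succAbove_comp.2 hg
  rw [occCount_eq_ncard, himage,
    ncard_image_of_injective _ p.succAbove_right_injective.comp_left, ← occCount_eq_ncard]

theorem occCount_insertEntry_zero_last {α : Perm (Fin (k + 1))} (hα : α 0 ≠ Fin.last k)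
    (σ : Perm (Fin m)) : occCount α (insertEntry 0 (Fin.last m) σ) = occCount α σ := by
  refine occCount_insertEntry_of_forall_ne fun f hf a ha => hα ?_
  obtain rfl : a = 0 := (hf.1.isMin_of_apply (ha ▸ isMin_bot)).eq_bot
  exact hf.eq_last_of_apply_eq_last (by simp [ha])

theorem occCount_insertEntry_last_last {α : Perm (Fin (k + 1))}
    (hα : α (Fin.last k) ≠ Fin.last k) (σ : Perm (Fin m)) :
    occCount α (insertEntry (Fin.last m) (Fin.last m) σ) = occCount α σ := by
  refine occCount_insertEntry_of_forall_ne fun f hf a ha => hα ?_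
  obtain rfl : a = Fin.last k := (hf.1.isMax_of_apply (ha ▸ isMax_top)).eq_top
  exact hf.eq_last_of_apply_eq_last (by simp [ha])

end Insertion

section MaximumPosition

variable {m : ℕ} {π : Perm (Fin (m + 1))} {p : Fin (m + 1)}

theorem isOccurrence_p132_or_p231 (hp : π p = Fin.last m) {i j : Fin (m + 1)} (hi : i < p)
    (hj : p < j) : IsOccurrence p132 π ![i, p, j] ∨ IsOccurrence p231 π ![i, p, j] := by
  have lt_max {x : Fin (m + 1)} (hx : x ≠ p) : π x < π p :=
    hp ▸ Fin.lt_last_iff_ne_last.2 (hp ▸ π.injective.ne hx)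
  obtain h | h := (π.injective.ne (hi.trans hj).ne).lt_or_gt
  · exact .inl (isOccurrence_p132 hi hj h (lt_max hj.ne'))
  · exact .inr (isOccurrence_p231 hi hj h (lt_max hi.ne))

theorem mul_sub_le_occCount_add_occCount (hp : π p = Fin.last m) :
    (p : ℕ) * (m - p) ≤ occCount p132 π + occCount p231 π := by
  let triple (x : Fin (m + 1) × Fin (m + 1)) : Fin 3 → Fin (m + 1) := ![x.1, p, x.2]
  have triple_injective : triple.Injective := fun x y h =>
    Prod.ext (congrFun h 0) (congrFun h 2)
  calc (p : ℕ) * (m - p) = (Iio p ×ˢ Ioi p).ncard := by simp [ncard_eq_toFinset_card']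
    _ = (triple '' (Iio p ×ˢ Ioi p)).ncard := (ncard_image_of_injective _ triple_injective).symm
    _ ≤ ({f | IsOccurrence p132 π f} ∪ {f | IsOccurrence p231 π f}).ncard := by
      refine ncard_le_ncard (image_subset_iff.2 ?_)
      rintro ⟨i, j⟩ ⟨hi, hj⟩
      exact isOccurrence_p132_or_p231 hp hi hj
    _ ≤ occCount p132 π + occCount p231 π := ncard_union_le _ _

theorem eq_zero_or_eq_last_of_occCount_add_lt (hp : π p = Fin.last m)
    (h : occCount p132 π + occCount p231 π + 1 < m) : p = 0 ∨ p = Fin.last m := by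
  by_contra! hp'
  have hle := mul_sub_le_occCount_add_occCount hp
  have p_ne_zero : (p : ℕ) ≠ 0 := Fin.val_ne_zero_iff.2 hp'.1
  have p_lt : (p : ℕ) < m := Fin.val_lt_last hp'.2
  have hge : p + (m - p) - 1 ≤ p * (m - p) := Nat.add_sub_one_le_mul p_ne_zero (by omega)
  omega

end MaximumPosition

section Counting

variable {a b m : ℕ}

/-- The permutations of length `n` with exactly `a` occurrences of `132` and `b` of `231`; both
sides of the theorem are cardinalities of such sets. -/
def permsWithOccCounts (a b n : ℕ) : Set (Perm (Fin n)) :=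
  {π | occCount p132 π = a ∧ occCount p231 π = b}

theorem insertEntry_zero_last_mem_permsWithOccCounts {σ : Perm (Fin m)} :
    insertEntry 0 (Fin.last m) σ ∈ permsWithOccCounts a b (m + 1) ↔
      σ ∈ permsWithOccCounts a b m := by
  simp only [permsWithOccCounts, mem_ofPred_eq]
  rw [occCount_insertEntry_zero_last (by decide), occCount_insertEntry_zero_last (by decide)]

theorem insertEntry_last_last_mem_permsWithOccCounts {σ : Perm (Fin m)} :
    insertEntry (Fin.last m) (Fin.last m) σ ∈ permsWithOccCounts a b (m + 1) ↔
      σ ∈ permsWithOccCounts a b m := by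
  simp only [permsWithOccCounts, mem_ofPred_eq]
  rw [occCount_insertEntry_last_last (by decide), occCount_insertEntry_last_last (by decide)]

theorem permsWithOccCounts_succ (h : a + b + 1 < m) :
    permsWithOccCounts a b (m + 1) =
      insertEntry 0 (Fin.last m) '' permsWithOccCounts a b m ∪
        insertEntry (Fin.last m) (Fin.last m) '' permsWithOccCounts a b m := by
  apply Subset.antisymm
  · intro π hπ
    obtain ⟨p, hp⟩ := π.surjective (Fin.last m)
    obtain ⟨σ, rfl⟩ : π ∈ range (insertEntry p (Fin.last m)) := by rwa [range_insertEntry]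
    have hlt := h
    rw [← hπ.1, ← hπ.2] at hlt
    obtain rfl | rfl := eq_zero_or_eq_last_of_occCount_add_lt hp hlt
    · exact .inl ⟨σ, insertEntry_zero_last_mem_permsWithOccCounts.1 hπ, rfl⟩
    · exact .inr ⟨σ, insertEntry_last_last_mem_permsWithOccCounts.1 hπ, rfl⟩
  · rintro _ (⟨σ, hσ, rfl⟩ | ⟨σ, hσ, rfl⟩)
    · exact insertEntry_zero_last_mem_permsWithOccCounts.2 hσ
    · exact insertEntry_last_last_mem_permsWithOccCounts.2 hσ

theorem ncard_permsWithOccCounts_succ (h : a + b + 1 < m) :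
    (permsWithOccCounts a b (m + 1)).ncard = 2 * (permsWithOccCounts a b m).ncard := by
  have hends : (0 : Fin (m + 1)) ≠ Fin.last m := Fin.ne_of_val_ne (by simp; omega)
  have hdisj : Disjoint (range (insertEntry 0 (Fin.last m)))
      (range (insertEntry (Fin.last m) (Fin.last m))) := by
    simp only [range_insertEntry]
    exact disjoint_left.2 fun π h₀ hₘ => hends (π.injective (h₀.trans hₘ.symm))
  rw [permsWithOccCounts_succ h,
    ncard_union_eq (hdisj.mono (image_subset_range _ _) (image_subset_range _ _)),
    ncard_image_of_injective _ (insertEntry_injective _ _),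
    ncard_image_of_injective _ (insertEntry_injective _ _), two_mul]

theorem ncard_permsWithOccCounts_add (h : a + b + 1 < m) (k : ℕ) :
    (permsWithOccCounts a b (m + k)).ncard = 2 ^ k * (permsWithOccCounts a b m).ncard := by
  induction k with
  | zero => simp
  | succ k ih =>
    rw [← add_assoc, ncard_permsWithOccCounts_succ (by omega), ih, pow_succ', mul_assoc]

theorem permsWithOccCounts_zero_one_three : permsWithOccCounts 0 1 3 = {p231} := by
  ext π
  have h : p132 ≠ p231 := by decide
  simp only [permsWithOccCounts, occCount_eq_ite]
  grind

/-- The permutation `2413`, one of the two in `S_4` with a single `132` and a single `231`. -/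
def p2413 : Perm (Fin 4) := ⟨![1, 3, 0, 2], ![2, 0, 3, 1], by decide, by decide⟩

/-- The permutation `3142`, one of the two in `S_4` with a single `132` and a single `231`. -/
def p3142 : Perm (Fin 4) := ⟨![2, 0, 3, 1], ![1, 3, 0, 2], by decide, by decide⟩

theorem permsWithOccCounts_one_one_four : permsWithOccCounts 1 1 4 = {p2413, p3142} := by
  ext π
  simp only [permsWithOccCounts, occCount_eq_fintypeCard, mem_ofPred_eq, mem_insert_iff,
    mem_singleton_iff]
  revert π
  decide +kernel

end Counting

/-- For `n ≥ 4`, `s_n(132;231) = s_n(∅;{132,231})`, both being equal to `2^{n−3}`. -/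
theorem sAvoidContain_132_231_eq_sContainBoth :
    ∀ n : ℕ, 4 ≤ n →
      sAvoidContain p132 p231 n = sContainBoth p132 p231 n ∧
        sAvoidContain p132 p231 n = 2 ^ (n - 3) := by
  intro n hn
  obtain ⟨k, rfl⟩ := Nat.exists_eq_add_of_le hn
  have avoid_eq : sAvoidContain p132 p231 (4 + k) = 2 ^ (k + 1) := by
    calc sAvoidContain p132 p231 (4 + k)
        = (permsWithOccCounts 0 1 (3 + (k + 1))).ncard := by
          rw [show 4 + k = 3 + (k + 1) by omega]; rfl
      _ = 2 ^ (k + 1) := by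
          rw [ncard_permsWithOccCounts_add (by decide), permsWithOccCounts_zero_one_three,
            ncard_singleton, mul_one]
  have both_eq : sContainBoth p132 p231 (4 + k) = 2 ^ (k + 1) := by
    calc sContainBoth p132 p231 (4 + k) = (permsWithOccCounts 1 1 (4 + k)).ncard := rfl
      _ = 2 ^ (k + 1) := by
          rw [ncard_permsWithOccCounts_add (by decide), permsWithOccCounts_one_one_four,
            ncard_pair (by decide), pow_succ]
  exact ⟨avoid_eq.trans both_eq.symm, avoid_eq.trans (by congr 1; omega)⟩
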